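/- Define the sequence (a_i) of reals by a_0 = 1 and a_{i+1} = 1/(6 − 4·a_i). Then for every natural number i and every real ε > 0, there exists a constant C(i, ε) > 0 such that every connected n-vertex graph G has a +⌈C(i, ε)·n^{a_i + ε}⌉ additive emulator with at most C(i, ε)·n edges. -/

import Mathlib

open SimpleGraph

/-- The weighted distance in an emulator `H` with edge weights `w`:
the minimum total weight of a walk from `s` to `t` (`⊤` if none exists). -/
noncomputable def emulatorDist {V : Type*} (H : SimpleGraph V) (w : Sym2 V → ℕ)
    (s t : V) : ℕ∞ :=
  ⨅ p : H.Walk s t, ((p.edges.map w).sum : ℕ∞)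

/-- `H` (with positive integer edge weights `w`) is a `+k` additive emulator of `G`:
for all vertices `s, t`, `dist_G(s,t) ≤ dist_H(s,t) ≤ dist_G(s,t) + k`. -/
def IsAdditiveEmulator {V : Type*} (G H : SimpleGraph V) (w : Sym2 V → ℕ)
    (k : ℕ) : Prop :=
  (∀ e ∈ H.edgeSet, 0 < w e) ∧
  ∀ s t : V, (G.dist s t : ℕ∞) ≤ emulatorDist H w s t ∧
    emulatorDist H w s t ≤ (G.dist s t : ℕ∞) + (k : ℕ∞)

/-- The sequence `a_0 = 1`, `a_{i+1} = 1 / (6 - 4 a_i)`. -/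
noncomputable def aSeq : ℕ → ℝ
  | 0 => 1
  | i + 1 => 1 / (6 - 4 * aSeq i)

/-- Reachability by a walk in the weighted edge set `E` of total length at most the bound. -/
inductive Rch {V : Type} (d : V → V → ℕ) (E : Set (V × V)) : V → V → ℕ → Prop
  | nil (s : V) (l : ℕ) : Rch d E s s l
  | cons {u v t : V} {a b : ℕ} (h : (u, v) ∈ E ∨ (v, u) ∈ E) (hab : d u v + a ≤ b)
      (hr : Rch d E v t a) : Rch d E u t b

theorem Rch.mono_len {V : Type} {d : V → V → ℕ} {E : Set (V × V)} {s t : V} {a b : ℕ}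
    (h : Rch d E s t a) (hab : a ≤ b) : Rch d E s t b := by
  cases h with
  | nil => exact Rch.nil _ _
  | cons h1 h2 h3 => exact Rch.cons h1 (h2.trans hab) h3

theorem Rch.mono_set {V : Type} {d : V → V → ℕ} {E E' : Set (V × V)} (hE : E ⊆ E') {s t : V} {a : ℕ}
    (h : Rch d E s t a) : Rch d E' s t a := by
  induction h with
  | nil => exact Rch.nil _ _
  | cons h1 h2 _ ih => exact Rch.cons (h1.imp (fun x => hE x) (fun x => hE x)) h2 ih

theorem Rch.trans {V : Type} {d : V → V → ℕ} {E : Set (V × V)} {s t u : V} {a b : ℕ}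
    (h : Rch d E s t a) (h' : Rch d E t u b) : Rch d E s u (a + b) := by
  induction h with
  | nil => exact h'.mono_len (by omega)
  | cons h1 h2 _ ih => exact Rch.cons h1 (by omega) (ih h')

theorem Rch.trans' {V : Type} {d : V → V → ℕ} {E : Set (V × V)} {s t u : V} {a b c : ℕ}
    (h : Rch d E s t a) (h' : Rch d E t u b) (hc : a + b ≤ c) : Rch d E s u c :=
  (h.trans h').mono_len hc

theorem Rch.edge {V : Type} {d : V → V → ℕ} {E : Set (V × V)} {s t : V} {a : ℕ}
    (h : (s, t) ∈ E ∨ (t, s) ∈ E) (ha : d s t ≤ a) : Rch d E s t a :=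
  Rch.cons (a := 0) h (by omega) (Rch.nil _ _)

theorem Rch.map {V W : Type} {d : V → V → ℕ} {d' : W → W → ℕ} {E : Set (V × V)} {E' : Set (W × W)}
    (f : V → W) (hd : ∀ x y, d' (f x) (f y) ≤ d x y)
    (hE : ∀ x y, (x, y) ∈ E → (f x, f y) ∈ E')
    {s t : V} {a : ℕ}
    (h : Rch d E s t a) : Rch d' E' (f s) (f t) a := by
  induction h with
  | nil => exact Rch.nil _ _
  | cons h1 h2 _ ih =>
    exact Rch.cons (h1.imp (hE _ _) (hE _ _)) (by have := hd; exact (Nat.add_le_add_right (hd _ _) _).trans h2) ih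

/-- `E` is a finite edge set with additive error at most `x`. -/
def GoodE {V : Type} (G : SimpleGraph V) (E : Finset (V × V)) (x : ℝ) : Prop :=
  ∀ s t, ∃ l : ℕ, Rch G.dist (E : Set (V × V)) s t l ∧ (l : ℝ) ≤ G.dist s t + x

theorem toEmulator {V : Type} (G : SimpleGraph V) (hG : G.Connected) (E : Finset (V × V)) (x : ℝ)
    (h : GoodE G E x) : ∃ (H : SimpleGraph V) (w : Sym2 V → ℕ),
      IsAdditiveEmulator G H w ⌈x⌉₊ ∧ (H.edgeSet.ncard : ℝ) ≤ E.card := by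
  classical
  let H : SimpleGraph V := SimpleGraph.fromRel (fun u v => (u, v) ∈ E)
  let w : Sym2 V → ℕ := Sym2.lift ⟨fun u v => G.dist u v, fun u v => SimpleGraph.dist_comm⟩
  have hw : ∀ u v, w s(u, v) = G.dist u v := fun u v => rfl
  refine ⟨H, w, ⟨?_, ?_⟩, ?_⟩
  · intro e he
    induction e with
    | _ u v =>
      rw [hw]
      have : H.Adj u v := he
      exact (hG u v).pos_dist_of_ne this.ne
  · intro s t
    constructor
    · refine le_iInf fun p => ?_
      norm_cast
      induction p with
      | nil => simp
      | @cons u v t hadj p ih =>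
        simp only [SimpleGraph.Walk.edges_cons, List.map_cons, List.sum_cons]
        rw [hw]
        exact (hG.dist_triangle (v := v)).trans (by omega)
    · obtain ⟨l, hl, hlx⟩ := h s t
      have hl2 : l ≤ G.dist s t + ⌈x⌉₊ := by
        have := Nat.le_ceil x
        have h3 : (l : ℝ) ≤ ((G.dist s t + ⌈x⌉₊ : ℕ) : ℝ) := by push_cast; linarith
        exact_mod_cast h3
      have key : ∀ {s t l}, Rch G.dist (E : Set (V × V)) s t l →
          ∃ p : H.Walk s t, (p.edges.map w).sum ≤ l := by
        intro s t l hr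
        induction hr with
        | nil => exact ⟨SimpleGraph.Walk.nil, by simp⟩
        | @cons u v t a b h1 h2 _ ih =>
          obtain ⟨p, hp⟩ := ih
          by_cases huv : u = v
          · subst huv
            exact ⟨p, by omega⟩
          · have hadj : H.Adj u v := by
              rw [SimpleGraph.fromRel_adj]
              exact ⟨huv, by simpa using h1⟩
            refine ⟨SimpleGraph.Walk.cons hadj p, ?_⟩
            simp only [SimpleGraph.Walk.edges_cons, List.map_cons, List.sum_cons]
            rw [hw]; omega
      obtain ⟨p, hp⟩ := key hl
      refine (iInf_le _ p).trans ?_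
      exact_mod_cast hp.trans hl2
  · have hsub : H.edgeSet ⊆ ((E.image (fun q => s(q.1, q.2)) : Finset (Sym2 V)) : Set (Sym2 V)) := by
      intro e he
      induction e with
      | _ u v =>
        have h1 : H.Adj u v := he
        rw [SimpleGraph.fromRel_adj] at h1
        simp only [Finset.coe_image, Set.mem_image]
        rcases h1.2 with h2 | h2
        · exact ⟨(u, v), h2, rfl⟩
        · exact ⟨(v, u), h2, Sym2.eq_swap⟩
    have h1 := Set.ncard_le_ncard hsub (Finset.finite_toSet _)
    rw [Set.ncard_coe_finset] at h1
    exact_mod_cast h1.trans Finset.card_image_le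

theorem geodesic {V : Type} {G : SimpleGraph V} (hG : G.Connected) (s t : V) :
    ∃ f : ℕ → V, f 0 = s ∧ f (G.dist s t) = t ∧
      ∀ a b, a ≤ b → b ≤ G.dist s t → G.dist (f a) (f b) = b - a := by
  obtain ⟨p, hp⟩ := hG.exists_walk_length_eq_dist s t
  have hup : ∀ a k, a + k ≤ G.dist s t → G.dist (p.getVert a) (p.getVert (a + k)) ≤ k := by
    intro a k
    induction k with
    | zero => simp
    | succ k ih =>
      intro h
      have h1 := ih (by omega)
      have h2 : G.Adj (p.getVert (a + k)) (p.getVert (a + k + 1)) :=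
        p.adj_getVert_succ (by omega)
      have h3 := hG.dist_triangle (u := p.getVert a) (v := p.getVert (a + k))
        (w := p.getVert (a + k + 1))
      rw [SimpleGraph.dist_eq_one_iff_adj.2 h2] at h3
      rw [← add_assoc]; omega
  refine ⟨p.getVert, p.getVert_zero, ?_, ?_⟩
  · rw [← hp]; exact p.getVert_length
  · intro a b hab hb
    have e0 : p.getVert 0 = s := p.getVert_zero
    have e1 : p.getVert (G.dist s t) = t := by rw [← hp]; exact p.getVert_length
    have h1 := hup 0 a (by omega)
    have h2 := hup a (b - a) (by omega)
    have h3 := hup b (G.dist s t - b) (by omega)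
    rw [show a + (b - a) = b by omega] at h2
    rw [show b + (G.dist s t - b) = G.dist s t by omega, e1] at h3
    rw [zero_add, e0] at h1
    have h4 := hG.dist_triangle (u := s) (v := p.getVert a) (w := t)
    have h5 := hG.dist_triangle (u := p.getVert a) (v := p.getVert b) (w := t)
    omega

open Classical in
/-- closed ball -/
noncomputable def bl {V : Type} [Fintype V] (G : SimpleGraph V) (v : V) (M : ℕ) : Finset V :=
  Finset.univ.filter (fun x => G.dist v x ≤ M)

open Classical in
/-- sphere -/
noncomputable def sph {V : Type} [Fintype V] (G : SimpleGraph V) (v : V) (M : ℕ) : Finset V :=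
  Finset.univ.filter (fun x => G.dist v x = M)

theorem mem_bl {V : Type} [Fintype V] {G : SimpleGraph V} {v x : V} {M : ℕ} :
    x ∈ bl G v M ↔ G.dist v x ≤ M := by simp [bl]

theorem mem_sph {V : Type} [Fintype V] {G : SimpleGraph V} {v x : V} {M : ℕ} :
    x ∈ sph G v M ↔ G.dist v x = M := by simp [sph]

theorem bl_mono {V : Type} [Fintype V] {G : SimpleGraph V} {v : V} {M N : ℕ} (h : M ≤ N) :
    bl G v M ⊆ bl G v N := fun x hx => mem_bl.2 ((mem_bl.1 hx).trans h)

theorem induce_dist {V : Type} {G : SimpleGraph V} (hG : G.Connected) (S : Set V) (x y : V)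
    (hx : x ∈ S) (hy : y ∈ S) (h : ∀ z, G.dist x z + G.dist z y = G.dist x y → z ∈ S) :
    (G.induce S).Reachable ⟨x, hx⟩ ⟨y, hy⟩ ∧ (G.induce S).dist ⟨x, hx⟩ ⟨y, hy⟩ ≤ G.dist x y := by
  classical
  obtain ⟨p, hp⟩ := hG.exists_walk_length_eq_dist x y
  have hs : ∀ z ∈ p.support, z ∈ S := by
    intro z hz
    apply h
    have h1 := congrArg SimpleGraph.Walk.length (p.take_spec hz)
    rw [SimpleGraph.Walk.length_append] at h1
    have h2 := SimpleGraph.dist_le (p.takeUntil z hz)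
    have h3 := SimpleGraph.dist_le (p.dropUntil z hz)
    have h4 := hG.dist_triangle (u := x) (v := z) (w := y)
    omega
  let q := p.induce S hs
  have hq : q.length = p.length := by
    have := congrArg SimpleGraph.Walk.length (SimpleGraph.Walk.map_induce (s := S) p hs)
    rwa [SimpleGraph.Walk.length_map] at this
  refine ⟨⟨q⟩, ?_⟩
  rw [← hp, ← hq]
  exact SimpleGraph.dist_le q

/-- Inductive hypothesis in natural number form. -/
def IHyp (n C : ℕ) (h : ℕ → ℕ) : Prop :=
  ∀ (W : Type) [Fintype W] (G : SimpleGraph W), G.Connected → Fintype.card W ≤ n →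
    ∃ E : Finset (W × W), E.card ≤ C * Fintype.card W ∧
      ∀ s t, Rch G.dist (E : Set (W × W)) s t (G.dist s t + h (Fintype.card W))

theorem local_emulator {V : Type} [Fintype V] {G : SimpleGraph V} (hG : G.Connected)
    {C : ℕ} {h : ℕ → ℕ} (hI : IHyp (Fintype.card V) C h) (v : V) (M : ℕ) :
    ∃ E : Finset (V × V), E.card ≤ C * (bl G v M).card ∧
      ∀ x y N, G.dist v x ≤ N → G.dist v y ≤ N → 2 * N ≤ M →
        Rch G.dist (E : Set (V × V)) x y (G.dist x y + h (bl G v M).card) := by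
  classical
  let S : Set V := (bl G v M : Set V)
  have hmem : ∀ x, x ∈ S ↔ G.dist v x ≤ M := fun x => by
    simp only [S, Finset.mem_coe, mem_bl]
  have hvS : v ∈ S := by rw [hmem]; simp
  have hcard : Fintype.card S = (bl G v M).card := by simp [S]
  have hconn : (G.induce S).Connected := by
    have h0 : ∀ x : S, (G.induce S).Reachable ⟨v, hvS⟩ x := by
      rintro ⟨x, hx⟩
      refine (induce_dist hG S v x hvS hx ?_).1
      intro z hz
      rw [hmem] at hx ⊢
      omega
    have : Nonempty S := ⟨⟨v, hvS⟩⟩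
    exact SimpleGraph.Connected.mk (fun a b => (h0 a).symm.trans (h0 b))
  obtain ⟨E, hE, hR⟩ := hI S (G.induce S) hconn (by rw [hcard]; exact Finset.card_le_univ _)
  refine ⟨E.image (fun q => ((q.1 : V), (q.2 : V))), ?_, ?_⟩
  · rw [← hcard]; exact Finset.card_image_le.trans hE
  · intro x y N hx hy hN
    have hxS : x ∈ S := by rw [hmem]; omega
    have hyS : y ∈ S := by rw [hmem]; omega
    have h1 := hR ⟨x, hxS⟩ ⟨y, hyS⟩
    have h2 := (induce_dist hG S x y hxS hyS (by
      intro z hz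
      rw [hmem]
      have h3 := hG.dist_triangle (u := v) (v := x) (w := z)
      have h4 := hG.dist_triangle (u := v) (v := y) (w := z)
      have h5 := hG.dist_triangle (u := x) (v := v) (w := y)
      rw [SimpleGraph.dist_comm (u := x) (v := v)] at h5
      rw [SimpleGraph.dist_comm (u := y) (v := z)] at h4
      omega)).2
    rw [hcard] at h1
    have h6 := Rch.map (d' := G.dist)
      (E' := ((E.image (fun q => ((q.1 : V), (q.2 : V))) : Finset (V × V)) : Set (V × V)))
      (fun z : S => (z : V)) (by
        intro a b
        obtain ⟨p, hp⟩ := hconn.exists_walk_length_eq_dist a b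
        rw [← hp]
        have := SimpleGraph.dist_le (p.map (SimpleGraph.Embedding.induce S).toHom)
        rw [SimpleGraph.Walk.length_map] at this
        exact this) (by
        intro a b hab
        rw [Finset.mem_coe] at hab
        exact Finset.mem_coe.2 (Finset.mem_image.2 ⟨(a, b), hab, rfl⟩)) h1
    exact h6.mono_len (by omega)

theorem exists_scale {V : Type} [Fintype V] {G : SimpleGraph V}
    (A L r : ℕ) (hA : Fintype.card V < A ^ L) (v : V) :
    ∃ R, r ≤ R ∧ R ≤ r * 20 ^ L ∧ (bl G v (20 * R)).card ≤ A * (bl G v R).card := by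
  by_contra hcon
  push Not at hcon
  have h : ∀ k ≤ L, A ^ k ≤ (bl G v (r * 20 ^ k)).card := by
    intro k
    induction k with
    | zero =>
      intro _
      rw [pow_zero, Nat.one_le_iff_ne_zero, Finset.card_ne_zero]
      exact ⟨v, mem_bl.2 (by simp)⟩
    | succ k ih =>
      intro hk
      have h1 := ih (by omega)
      have h2 := hcon (r * 20 ^ k) (Nat.le_mul_of_pos_right _ (by positivity))
        (Nat.mul_le_mul_left _ (Nat.pow_le_pow_right (by norm_num) (by omega)))
      rw [show 20 * (r * 20 ^ k) = r * 20 ^ (k + 1) by ring] at h2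
      rw [pow_succ, mul_comm]
      exact (Nat.mul_le_mul_left A h1).trans h2.le
  have := h L le_rfl
  have h2 : (bl G v (r * 20 ^ L)).card ≤ Fintype.card V := Finset.card_le_univ _
  omega

theorem exists_sphere {V : Type} [Fintype V] {G : SimpleGraph V} (v : V) (R : ℕ) (hR : 1 ≤ R) :
    ∃ ρ, 2 * R ≤ ρ ∧ ρ < 3 * R ∧ R * (sph G v ρ).card ≤ (bl G v (3 * R)).card := by
  classical
  by_contra hcon
  push Not at hcon
  have h1 : ∑ ρ ∈ Finset.Ico (2 * R) (3 * R), (sph G v ρ).card ≤ (bl G v (3 * R)).card := by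
    rw [← Finset.card_biUnion]
    · apply Finset.card_le_card
      intro x hx
      simp only [Finset.mem_biUnion, Finset.mem_Ico, mem_sph] at hx
      rw [mem_bl]
      obtain ⟨a, ha, hb⟩ := hx
      omega
    · intro a _ b _ hab
      change Disjoint (sph G v a) (sph G v b)
      rw [Finset.disjoint_left]
      intro x hx hx'
      rw [mem_sph] at hx hx'
      omega
  have h2 : ∑ ρ ∈ Finset.Ico (2 * R) (3 * R), (bl G v (3 * R)).card <
      ∑ ρ ∈ Finset.Ico (2 * R) (3 * R), R * (sph G v ρ).card := by
    apply Finset.sum_lt_sum_of_nonempty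
    · rw [Finset.nonempty_Ico]; omega
    · intro ρ hρ
      rw [Finset.mem_Ico] at hρ
      exact hcon ρ hρ.1 hρ.2
  rw [← Finset.mul_sum, Finset.sum_const, Nat.card_Ico, smul_eq_mul,
    show 3 * R - 2 * R = R by omega] at h2
  exact absurd (Nat.mul_le_mul_left R h1) (by omega)

theorem clustering {V : Type} [Fintype V] {G : SimpleGraph V} (hG : G.Connected)
    (A L r : ℕ) (hr : 1 ≤ r) (hA : Fintype.card V < A ^ L) :
    ∃ (I : Finset V) (R ρ : V → ℕ) (cov : V → V),
      (∀ v, r ≤ R v) ∧ (∀ v, R v ≤ r * 20 ^ L) ∧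
      (∀ v, (bl G v (20 * R v)).card ≤ A * (bl G v (R v)).card) ∧
      (∀ u ∈ I, ∀ v ∈ I, u ≠ v → Disjoint (bl G u (R u)) (bl G v (R v))) ∧
      (∀ x, cov x ∈ I ∧ G.dist (cov x) x ≤ 2 * R (cov x)) ∧
      (∀ v, 2 * R v ≤ ρ v ∧ ρ v < 3 * R v ∧
        R v * (sph G v (ρ v)).card ≤ (bl G v (3 * R v)).card) := by
  classical
  choose R hR1 hR2 hR3 using fun v => exists_scale (G := G) A L r hA v
  choose ρ hρ using fun v => exists_sphere (G := G) v (R v) (hr.trans (hR1 v))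
  obtain ⟨u, -, hu1, hu2⟩ := Vitali.exists_disjoint_subfamily_covering_enlargement
    (fun v => (bl G v (R v) : Set V)) Set.univ (fun v => (3 : ℝ) ^ (R v)) 2 (by norm_num)
    (fun _ _ => by positivity) ((3 : ℝ) ^ (r * 20 ^ L))
    (fun v _ => pow_le_pow_right₀ (by norm_num) (hR2 v))
    (fun v _ => ⟨v, by simp [mem_bl]⟩)
  have hcov : ∀ x, ∃ b, b ∈ u ∧ G.dist b x ≤ 2 * R b := by
    intro x
    obtain ⟨b, hb, ⟨z, hz1, hz2⟩, h2⟩ := hu2 x (Set.mem_univ _)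
    refine ⟨b, hb, ?_⟩
    rw [Finset.mem_coe, mem_bl] at hz1 hz2
    have hle : R x ≤ R b := by
      by_contra hlt
      have h3 : (3 : ℝ) ^ (R b + 1) ≤ 3 ^ R x := pow_le_pow_right₀ (by norm_num) (by omega)
      rw [pow_succ] at h3
      have h4 : (0 : ℝ) < 3 ^ R b := by positivity
      have h5 : (3 : ℝ) ^ R x ≤ 2 * 3 ^ R b := h2
      linarith
    have h3 := hG.dist_triangle (u := b) (v := z) (w := x)
    rw [SimpleGraph.dist_comm (u := z)] at h3
    omega
  choose cov hc1 hc2 using hcov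
  refine ⟨u.toFinset, R, ρ, cov, hR1, hR2, hR3, ?_, ?_, hρ⟩
  · intro a ha b hb hab
    rw [Set.mem_toFinset] at ha hb
    have := hu1 ha hb hab
    exact Finset.disjoint_coe.1 this
  · intro x
    exact ⟨Set.mem_toFinset.2 (hc1 x), hc2 x⟩

theorem hitting {V J : Type} [DecidableEq V] [hV : Nonempty V] (I : Finset V) (wt : V → ℕ) (n T : ℕ)
    (hn : 0 < n) (hI : ∑ v ∈ I, wt v ≤ n) (F : J → Finset V) (hF : ∀ j, F j ⊆ I)
    (m : ℕ) (Js : Finset J) (hT : ∀ j ∈ Js, T ≤ ∑ v ∈ F j, wt v) :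
    ∃ P : Finset V, P.card ≤ m ∧
      ((Js.filter (fun j => Disjoint (F j) P)).card : ℝ) ≤ Js.card * Real.exp (-(T / n : ℝ)) ^ m := by
  induction m with
  | zero => exact ⟨∅, by simp, by simp⟩
  | succ m ih =>
    obtain ⟨P, hP, hP2⟩ := ih
    set Q := Js.filter (fun j => Disjoint (F j) P) with hQ
    have hdouble : T * Q.card ≤ ∑ v ∈ I, wt v * (Q.filter (fun j => v ∈ F j)).card := by
      calc T * Q.card = ∑ j ∈ Q, T := by simp [mul_comm]
        _ ≤ ∑ j ∈ Q, ∑ v ∈ F j, wt v :=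
          Finset.sum_le_sum fun j hj => hT j (Finset.mem_filter.1 hj).1
        _ = ∑ j ∈ Q, ∑ v ∈ I, if v ∈ F j then wt v else 0 := by
          refine Finset.sum_congr rfl fun j _ => ?_
          rw [← Finset.sum_filter]
          congr 1
          ext v
          simp only [Finset.mem_filter]
          exact ⟨fun h => ⟨hF j h, h⟩, fun h => h.2⟩
        _ = ∑ v ∈ I, ∑ j ∈ Q, if v ∈ F j then wt v else 0 := Finset.sum_comm
        _ = _ := by
          refine Finset.sum_congr rfl fun v _ => ?_
          rw [← Finset.sum_filter, Finset.sum_const, smul_eq_mul, mul_comm]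
    have hex : ∃ v, T * Q.card ≤ n * (Q.filter (fun j => v ∈ F j)).card ∨ Q.card = 0 := by
      by_contra hcon
      push Not at hcon
      have h0 : 0 < T * Q.card := by
        have := (hcon hV.some).1
        omega
      have h1 : n * (T * Q.card) ≤ ∑ v ∈ I, wt v * (n * (Q.filter (fun j => v ∈ F j)).card) := by
        calc n * (T * Q.card) ≤ n * _ := Nat.mul_le_mul_left _ hdouble
          _ = _ := by
            rw [Finset.mul_sum]
            exact Finset.sum_congr rfl fun v _ => by ring
      have h2 : ∑ v ∈ I, wt v * (n * (Q.filter (fun j => v ∈ F j)).card) ≤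
          ∑ v ∈ I, wt v * (T * Q.card - 1) :=
        Finset.sum_le_sum fun v _ => Nat.mul_le_mul_left _ (by have := (hcon v).1; omega)
      rw [← Finset.sum_mul] at h2
      have h3 : (∑ v ∈ I, wt v) * (T * Q.card - 1) ≤ n * (T * Q.card - 1) :=
        Nat.mul_le_mul_right _ hI
      have h4 : n * (T * Q.card - 1) < n * (T * Q.card) :=
        Nat.mul_lt_mul_of_pos_left (by omega) hn
      omega
    obtain ⟨v, hv⟩ := hex
    refine ⟨insert v P, (Finset.card_insert_le _ _).trans (by omega), ?_⟩
    have hsplit : (Js.filter (fun j => Disjoint (F j) (insert v P))).card +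
        (Q.filter (fun j => v ∈ F j)).card = Q.card := by
      rw [← Finset.card_filter_add_card_filter_not (s := Q) (fun j => v ∉ F j)]
      congr 2
      · ext j
        simp only [hQ, Finset.mem_filter, Finset.disjoint_insert_right]
        tauto
      · ext j; simp
    have hn' : (0 : ℝ) < n := by exact_mod_cast hn
    have h5 : ((Js.filter (fun j => Disjoint (F j) (insert v P))).card : ℝ) ≤
        Q.card * (1 - T / n) := by
      have h6 : (((Js.filter (fun j => Disjoint (F j) (insert v P))).card : ℝ)) +
        ((Q.filter (fun j => v ∈ F j)).card : ℝ) = Q.card := by exact_mod_cast hsplit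
      rcases hv with hv | hv
      · have h7 : (T : ℝ) * Q.card ≤ n * (Q.filter (fun j => v ∈ F j)).card := by exact_mod_cast hv
        have h8 : (Q.card : ℝ) * (T / n) ≤ (Q.filter (fun j => v ∈ F j)).card := by
          rw [← mul_div_assoc, div_le_iff₀ hn']
          linarith
        linarith
      · have h7 : (Js.filter (fun j => Disjoint (F j) (insert v P))).card = 0 := by omega
        rw [h7, hv]; simp
    calc _ ≤ (Q.card : ℝ) * (1 - T / n) := h5
      _ ≤ Q.card * Real.exp (-(T / n : ℝ)) := by
        gcongr
        have := Real.add_one_le_exp (-(T / n : ℝ))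
        linarith
      _ ≤ (Js.card * Real.exp (-(T / n : ℝ)) ^ m) * Real.exp (-(T / n : ℝ)) := by gcongr
      _ = _ := by rw [pow_succ]; ring

theorem trace {V : Type} [Fintype V] {G : SimpleGraph V} (hG : G.Connected)
    (I : Finset V) (R ρ : V → ℕ) (cov : V → V)
    (hcov : ∀ x, cov x ∈ I ∧ G.dist (cov x) x ≤ 2 * R (cov x))
    (hρ : ∀ v, 2 * R v ≤ ρ v) (s t : V) :
    ∃ (q : ℕ) (c : ℕ → V) (e : ℕ → ℕ) (x : ℕ → V),
      e q = G.dist s t ∧ x q = t ∧ (∀ l, c l ∈ I) ∧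
      (∀ l l', l < l' → l' ≤ q → c l ≠ c l') ∧
      (∀ l ≤ q, G.dist (c l) (x l) ≤ ρ (c l)) ∧
      (∀ l < q, x l ∈ sph G (c l) (ρ (c l))) ∧
      (∀ l < q, G.dist (c (l + 1)) (x l) ≤ 2 * R (c (l + 1)) + 1) ∧
      G.dist (c 0) s ≤ 2 * R (c 0) ∧
      (∀ l l', l ≤ l' → l' ≤ q → e l ≤ e l' ∧ G.dist (x l) (x l') = e l' - e l) ∧
      (∀ l ≤ q, G.dist s (x l) = e l ∧ e l ≤ G.dist s t) := by
  classical
  obtain ⟨f, hf0, hfD, hf⟩ := geodesic hG s t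
  set D := G.dist s t with hD
  let last : V → ℕ := fun i => Nat.findGreatest (fun k => G.dist i (f k) ≤ ρ i) D
  have hlast_le : ∀ i, last i ≤ D := fun i => Nat.findGreatest_le D
  have hcov' : ∀ x, G.dist (cov x) x ≤ ρ (cov x) := fun x => (hcov x).2.trans (hρ _)
  have hlast_ge : ∀ k ≤ D, k ≤ last (cov (f k)) := fun k hk =>
    Nat.le_findGreatest hk (hcov' (f k))
  have hlast_spec : ∀ k ≤ D, G.dist (cov (f k)) (f (last (cov (f k)))) ≤ ρ (cov (f k)) :=
    fun k hk => Nat.findGreatest_spec (P := fun j => G.dist (cov (f k)) (f j) ≤ ρ (cov (f k)))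
      hk (hcov' (f k))
  have hlast_max : ∀ i k, last i < k → k ≤ D → ρ i < G.dist i (f k) := fun i k h1 h2 =>
    not_le.1 (Nat.findGreatest_is_greatest (P := fun k => G.dist i (f k) ≤ ρ i) h1 h2)
  let e : ℕ → ℕ := fun l => Nat.rec (motive := fun _ => ℕ) (last (cov (f 0))) (fun _ k => last (cov (f (k + 1)))) l
  have he0 : e 0 = last (cov (f 0)) := rfl
  have heS : ∀ l, e (l + 1) = last (cov (f (e l + 1))) := fun l => rfl
  let c : ℕ → V := fun l => match l with
    | 0 => cov (f 0)
    | l + 1 => cov (f (e l + 1))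
  have hc0 : c 0 = cov (f 0) := rfl
  have hcS : ∀ l, c (l + 1) = cov (f (e l + 1)) := fun l => rfl
  have hec : ∀ l, e l = last (c l) := by
    intro l
    cases l with
    | zero => rfl
    | succ l => rfl
  have heD : ∀ l, e l ≤ D := fun l => by rw [hec]; exact hlast_le _
  have hinc : ∀ l, e l < D → e l < e (l + 1) := fun l hl => by
    have := hlast_ge (e l + 1) (by omega)
    rw [heS]; omega
  have hex : ∃ l, e l = D := by
    by_contra hcon
    push Not at hcon
    have : ∀ l, l ≤ e l := by
      intro l
      induction l with
      | zero => omega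
      | succ l ih =>
        have := hinc l (lt_of_le_of_ne (heD l) (hcon l))
        omega
    have h1 := this (D + 1)
    have h2 := heD (D + 1)
    omega
  obtain ⟨q, hq, hmin⟩ : ∃ q, e q = D ∧ ∀ l < q, e l ≠ D := by
    clear_value e
    exact ⟨Nat.find hex, Nat.find_spec hex, fun l hl => Nat.find_min hex hl⟩
  have hlt : ∀ l < q, e l < D := fun l hl => lt_of_le_of_ne (heD l) (hmin l hl)
  have hstrict : ∀ l l', l < l' → l' ≤ q → e l < e l' := by
    intro l l' h
    induction l', h using Nat.le_induction with
    | base => intro h; exact hinc l (hlt l (by omega))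
    | succ k hk ih =>
      intro h
      exact (ih (by omega)).trans (hinc k (hlt k (by omega)))
  have hmono : ∀ l l', l ≤ l' → l' ≤ q → e l ≤ e l' := by
    intro l l' h h'
    rcases h.eq_or_lt with h | h
    · rw [h]
    · exact (hstrict l l' h h').le
  have hball : ∀ l ≤ q, G.dist (c l) (f (e l)) ≤ ρ (c l) := by
    intro l hl
    cases l with
    | zero => exact hlast_spec 0 (by omega)
    | succ l => exact hlast_spec (e l + 1) (hlt l (by omega))
  refine ⟨q, c, e, fun l => f (e l), hq, by simp only [hq]; exact hfD, ?_, ?_, hball, ?_, ?_, ?_, ?_, ?_⟩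
  · intro l
    cases l with
    | zero => exact (hcov _).1
    | succ l => exact (hcov _).1
  · intro l l' hll hl' heq
    obtain ⟨k, rfl⟩ : ∃ k, l' = k + 1 := ⟨l' - 1, by omega⟩
    have h1 : last (c l) < e k + 1 := by
      rw [← hec]
      have := hmono l k (by omega) (by omega)
      omega
    have h2 := hlast_max (c l) (e k + 1) h1 (hlt k (by omega))
    rw [heq, hcS] at h2
    exact absurd (hcov' (f (e k + 1))) (by omega)
  · intro l hl
    rw [mem_sph]
    have h1 := hball l hl.le
    have h2 := hlast_max (c l) (e l + 1) (by rw [← hec]; omega) (hlt l hl)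
    have h3 := hG.dist_triangle (u := c l) (v := f (e l)) (w := f (e l + 1))
    rw [hf (e l) (e l + 1) (by omega) (hlt l hl)] at h3
    simp only at h1 ⊢
    omega
  · intro l hl
    have h1 : G.dist (c (l + 1)) (f (e l + 1)) ≤ 2 * R (c (l + 1)) := (hcov _).2
    have h3 := hG.dist_triangle (u := c (l + 1)) (v := f (e l + 1)) (w := f (e l))
    rw [SimpleGraph.dist_comm (u := f (e l + 1)), hf (e l) (e l + 1) (by omega) (hlt l hl)] at h3
    simp only
    omega
  · have := (hcov (f 0)).2
    rw [hf0] at this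
    rw [hc0, hf0]
    exact this
  · intro l l' h h'
    exact ⟨hmono l l' h h', hf _ _ (hmono l l' h h') (heD l')⟩
  · intro l hl
    refine ⟨?_, heD l⟩
    have := hf 0 (e l) (by omega) (heD l)
    rw [hf0] at this
    simpa using this

theorem route {V : Type} [Fintype V] [DecidableEq V] {G : SimpleGraph V} (hG : G.Connected)
    (I : Finset V) (R ρ : V → ℕ) (cov : V → V)
    (hcov : ∀ x, cov x ∈ I ∧ G.dist (cov x) x ≤ 2 * R (cov x))
    (hρ : ∀ v, 2 * R v ≤ ρ v) (hρ2 : ∀ v, ρ v < 3 * R v) (M : ℕ) (hM : ∀ v, R v ≤ M)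
    (E : Set (V × V)) (hstar : ∀ i ∈ I, ∀ x, G.dist i x ≤ 3 * R i → (i, x) ∈ E)
    (gg core : V → ℕ) (B : ℝ) (hB : 0 ≤ B) (hgg : ∀ i ∈ I, (gg i : ℝ) ≤ B * core i)
    (htr : ∀ i ∈ I, ∀ j ∈ I, ∀ x y, x ∈ sph G j (ρ j) → y ∈ sph G i (ρ i) →
      G.dist i x ≤ 2 * R i + 1 → Rch G.dist E x y (G.dist x y + (gg j + gg i)))
    (T : ℕ) (hT : 0 < T) (s t : V) :
    ∃ F : Bool → Finset V, (∀ b, F b ⊆ I) ∧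
      ((∃ l : ℕ, Rch G.dist E s t l ∧ (l : ℝ) ≤ G.dist s t + (29 * M + 4 * B * T)) ∨
       ((∀ b, T ≤ ∑ v ∈ F b, core v) ∧ ∀ u ∈ F true, ∀ w ∈ F false, ∃ a b : ℕ,
          Rch G.dist E s u a ∧ Rch G.dist E w t b ∧
          ((a + G.dist u w + b : ℕ) : ℝ) ≤ G.dist s t + (29 * M + 4 * B * T))) := by
  obtain ⟨q, c, e, x, heq, hxq, hcI, hinj, hball, hsph, hnext, h0, hee, hse⟩ :=
    trace hG I R ρ cov hcov hρ s t
  have hR1 : ∀ v, 1 ≤ R v := fun v => by have := hρ v; have := hρ2 v; omega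
  have hball3 : ∀ l ≤ q, G.dist (c l) (x l) ≤ 3 * R (c l) := fun l hl =>
    (hball l hl).trans (hρ2 _).le
  have hout : ∀ l ≤ q, Rch G.dist E (c l) (x l) (3 * M) := fun l hl =>
    Rch.edge (Or.inl (hstar _ (hcI l) _ (hball3 l hl)))
      ((hball3 l hl).trans (Nat.mul_le_mul_left _ (hM _)))
  have hin : ∀ l < q, Rch G.dist E (x l) (c (l + 1)) (3 * M) := fun l hl => by
    have h1 := hnext l hl
    have h2 := hR1 (c (l + 1))
    have h3 := hM (c (l + 1))
    refine Rch.edge (Or.inr (hstar _ (hcI _) _ (by omega))) ?_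
    rw [SimpleGraph.dist_comm]; omega
  have hseg : ∀ l k, l + k < q → Rch G.dist E (x l) (x (l + k)) (e (l + k) - e l +
      ∑ j ∈ Finset.range k, (gg (c (l + j)) + gg (c (l + j + 1)))) := by
    intro l k
    induction k with
    | zero => intro _; exact Rch.nil _ _
    | succ k ih =>
      intro hk
      have h1 := ih (by omega)
      have h2 := htr (c (l + k + 1)) (hcI _) (c (l + k)) (hcI _) (x (l + k)) (x (l + k + 1))
        (hsph _ (by omega)) (hsph _ (by omega)) (hnext _ (by omega))
      have h3 := hee l (l + k) (by omega) (by omega)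
      have h4 := hee (l + k) (l + k + 1) (by omega) (by omega)
      refine h1.trans' h2 ?_
      rw [Finset.sum_range_succ, ← add_assoc l k 1]
      omega
  have hsum : ∀ l k, ∑ j ∈ Finset.range k, (gg (c (l + j)) + gg (c (l + j + 1))) ≤
      2 * ∑ j ∈ Finset.range (k + 1), gg (c (l + j)) := by
    intro l k
    rw [Finset.sum_add_distrib]
    have h1 := Finset.sum_range_succ (fun j => gg (c (l + j))) k
    have h2 := Finset.sum_range_succ' (fun j => gg (c (l + j))) k
    simp only [← add_assoc] at h2
    omega
  have harr : ∀ l ≤ q, Rch G.dist E s (c l) (e l + 8 * M + 2 * ∑ j ∈ Finset.range l, gg (c j)) := by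
    intro l hl
    have hs0 : Rch G.dist E s (c 0) (2 * M) := by
      have h3 := hM (c 0)
      refine Rch.edge (Or.inr (hstar _ (hcI _) _ (by omega))) ?_
      rw [SimpleGraph.dist_comm]; omega
    cases l with
    | zero => exact hs0.mono_len (by omega)
    | succ k =>
      have h1 := hseg 0 k (by omega)
      have h2 := hsum 0 k
      have h3 := hee 0 k (by omega) (by omega)
      have h4 := hee k (k + 1) (by omega) (by omega)
      simp only [zero_add] at h1 h2
      refine ((hs0.trans (hout 0 (by omega))).trans h1).trans' (hin k (by omega)) ?_
      omega
  have hdep : ∀ l ≤ q, Rch G.dist E (c l) t (G.dist s t - e l + 15 * M +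
      2 * ∑ j ∈ Finset.Ico (l + 1) (q + 1), gg (c j)) := by
    intro l hl
    have hqt : Rch G.dist E (c q) t (3 * M) := by
      have := hout q le_rfl
      rwa [hxq] at this
    rcases hl.eq_or_lt with rfl | hl
    · exact hqt.mono_len (by omega)
    · have h1 := (hout l hl.le).trans (hin l hl)
      by_cases hl1 : l + 1 = q
      · rw [hl1] at h1
        exact h1.trans' hqt (by omega)
      · obtain ⟨k, hk⟩ : ∃ k, q = l + 1 + k + 1 := ⟨q - l - 2, by omega⟩
        have h2 := hseg (l + 1) k (by omega)
        have h3 := hsum (l + 1) k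
        have h4 := hee l (l + 1) (by omega) (by omega)
        have h5 := hee (l + 1) (l + 1 + k) (by omega) (by omega)
        have h6 := hse (l + 1 + k) (by omega)
        have h7 := hin (l + 1 + k) (by omega)
        rw [← hk] at h7
        refine (((h1.trans (hout (l + 1) (by omega))).trans h2).trans h7).trans' hqt ?_
        rw [Finset.sum_Ico_eq_sum_range, show q + 1 - (l + 1) = k + 1 + 1 by omega,
          Finset.sum_range_succ _ (k + 1)]
        omega
  have hcast : ∀ Z : Finset ℕ, ((∑ j ∈ Z, gg (c j) : ℕ) : ℝ) ≤ B * ((∑ j ∈ Z, core (c j) : ℕ) : ℝ) := by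
    intro Z
    push_cast
    rw [Finset.mul_sum]
    exact Finset.sum_le_sum fun j _ => hgg _ (hcI j)
  have hcast2 : ∀ (Z : Finset ℕ) (X : ℕ), ∑ j ∈ Z, core (c j) ≤ X →
      ((∑ j ∈ Z, gg (c j) : ℕ) : ℝ) ≤ B * X := fun Z X h =>
    (hcast Z).trans (mul_le_mul_of_nonneg_left (by exact_mod_cast h) hB)
  by_cases htot : ∑ j ∈ Finset.range (q + 1), core (c j) < 2 * T
  · refine ⟨fun _ => ∅, by simp, Or.inl ⟨_, (harr q le_rfl).trans (hdep q le_rfl), ?_⟩⟩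
    rw [Finset.sum_range_succ] at htot
    have h1 := hcast2 (Finset.range q) (2 * T) (by omega)
    rw [heq]
    simp only [Finset.Ico_self, Finset.sum_empty]
    push_cast at h1 ⊢
    simp only [Nat.sub_self, Nat.cast_zero]
    have hM0 : (0 : ℝ) ≤ M := Nat.cast_nonneg _
    linarith
  · push Not at htot
    have hex : ∃ l, T ≤ ∑ j ∈ Finset.range (l + 1), core (c j) := ⟨q, by omega⟩
    classical
    obtain ⟨l1, hl1, hl1q, hl1T⟩ : ∃ l1, T ≤ ∑ j ∈ Finset.range (l1 + 1), core (c j) ∧ l1 ≤ q ∧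
        ∑ j ∈ Finset.range l1, core (c j) < T := by
      refine ⟨Nat.find hex, Nat.find_spec hex, Nat.find_min' hex (by omega), ?_⟩
      by_cases h : Nat.find hex = 0
      · rw [h]; simpa using hT
      · have := Nat.find_min hex (m := Nat.find hex - 1) (by omega)
        rw [show Nat.find hex - 1 + 1 = Nat.find hex by omega] at this
        omega
    have hP1 : T ≤ ∑ j ∈ Finset.Ico l1 (q + 1), core (c j) := by
      have := Finset.sum_range_add_sum_Ico (fun j => core (c j)) (show l1 ≤ q + 1 by omega)
      omega
    obtain ⟨l2, hl2, hl2q, hl12, hl2T⟩ : ∃ l2, T ≤ ∑ j ∈ Finset.Ico l2 (q + 1), core (c j) ∧ l2 ≤ q ∧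
        l1 ≤ l2 ∧ ∑ j ∈ Finset.Ico (l2 + 1) (q + 1), core (c j) < T := by
      let P : ℕ → Prop := fun l => T ≤ ∑ j ∈ Finset.Ico l (q + 1), core (c j)
      refine ⟨Nat.findGreatest P q, Nat.findGreatest_spec (P := P) hl1q hP1, Nat.findGreatest_le _,
        Nat.le_findGreatest (P := P) hl1q hP1, ?_⟩
      by_cases h : Nat.findGreatest P q = q
      · rw [h]; simpa using hT
      · have h1 : Nat.findGreatest P q ≤ q := Nat.findGreatest_le _
        exact not_le.1 (Nat.findGreatest_is_greatest (P := P)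
          (show Nat.findGreatest P q < Nat.findGreatest P q + 1 by omega) (by omega))
    have hinj' : ∀ Z : Finset ℕ, (∀ j ∈ Z, j ≤ q) →
        ∑ v ∈ Z.image c, core v = ∑ j ∈ Z, core (c j) := by
      intro Z hZ
      apply Finset.sum_image
      intro a ha b hb hab
      by_contra hne
      rcases lt_or_gt_of_ne hne with h | h
      · exact hinj a b h (hZ b hb) hab
      · exact hinj b a h (hZ a ha) hab.symm
    refine ⟨fun b => if b then (Finset.range (l1 + 1)).image c else (Finset.Ico l2 (q + 1)).image c,
      ?_, Or.inr ⟨?_, ?_⟩⟩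
    · intro b
      have : ∀ Z : Finset ℕ, Z.image c ⊆ I := by
        intro Z v hv
        obtain ⟨j, -, rfl⟩ := Finset.mem_image.1 hv
        exact hcI j
      cases b
      · exact this _
      · exact this _
    · intro b
      cases b
      · simp only [Bool.false_eq_true, if_false]
        rwa [hinj' _ (fun j hj => by rw [Finset.mem_Ico] at hj; omega)]
      · simp only [if_true]
        rwa [hinj' _ (fun j hj => by rw [Finset.mem_range] at hj; omega)]
    · intro u hu w hw
      simp only [if_true, Bool.false_eq_true, if_false, Finset.mem_image] at hu hw
      obtain ⟨a, ha, rfl⟩ := hu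
      obtain ⟨b, hb, rfl⟩ := hw
      rw [Finset.mem_range] at ha
      rw [Finset.mem_Ico] at hb
      refine ⟨_, _, harr a (by omega), hdep b (by omega), ?_⟩
      have g1 := hcast2 (Finset.range a) T ((Finset.sum_le_sum_of_subset
        (Finset.range_subset_range.2 (show a ≤ l1 by omega))).trans hl1T.le)
      have g2 := hcast2 (Finset.Ico (b + 1) (q + 1)) T ((Finset.sum_le_sum_of_subset
        (Finset.Ico_subset_Ico (show l2 + 1 ≤ b + 1 by omega) le_rfl)).trans hl2T.le)
      have h1 := hee a b (by omega) (by omega)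
      have h2 := hse b (by omega)
      have h3 := hball3 a (by omega)
      have h4 := hball3 b (by omega)
      have h5 := hM (c a)
      have h6 := hM (c b)
      have h7 := hG.dist_triangle (u := c a) (v := x a) (w := c b)
      have h8 := hG.dist_triangle (u := x a) (v := x b) (w := c b)
      rw [SimpleGraph.dist_comm (u := x b)] at h8
      have h9 : (e a + 8 * M + 2 * ∑ j ∈ Finset.range a, gg (c j)) + G.dist (c a) (c b) +
          (G.dist s t - e b + 15 * M + 2 * ∑ j ∈ Finset.Ico (b + 1) (q + 1), gg (c j)) ≤
          G.dist s t + 29 * M + 2 * ∑ j ∈ Finset.range a, gg (c j) +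
            2 * ∑ j ∈ Finset.Ico (b + 1) (q + 1), gg (c j) := by omega
      refine (Nat.cast_le (α := ℝ).2 h9).trans ?_
      push_cast at g1 g2 ⊢
      linarith

theorem step {V : Type} [Fintype V] {G : SimpleGraph V} (hG : G.Connected)
    (A L r C m T : ℕ) (h : ℕ → ℕ) (g : ℝ) (hg0 : 0 ≤ g) (hr : 1 ≤ r)
    (hA : Fintype.card V < A ^ L) (hI : IHyp (Fintype.card V) C h)
    (hg : ∀ k, r ^ 2 < k → k ≤ Fintype.card V → (h k : ℝ) ≤ g * k) (hT : 0 < T)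
    (hexp : 2 * (Fintype.card V : ℝ) ^ 2 * Real.exp (-(T / (Fintype.card V : ℕ) : ℝ)) ^ m < 1) :
    ∃ E : Finset (V × V), E.card ≤ (A + A ^ 3 + C * A) * Fintype.card V + m ^ 2 ∧
      GoodE G E (29 * ((r * 20 ^ L : ℕ) : ℝ) + 4 * (g * A) * T) := by
  classical
  have hne : Nonempty V := hG.nonempty
  have hn : 0 < Fintype.card V := Fintype.card_pos
  set n := Fintype.card V with hn_def
  obtain ⟨I, R, ρ, cov, hR1, hR2, hR3, hdisj, hcov, hρ⟩ := clustering hG A L r hr hA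
  let core : V → ℕ := fun v => (bl G v (R v)).card
  have hcore : ∀ v, core v = (bl G v (R v)).card := fun _ => rfl
  have hbig : ∀ v k, k ≤ 20 * R v → (bl G v k).card ≤ A * core v := fun v k hk =>
    (Finset.card_le_card (bl_mono hk)).trans (hR3 v)
  have hdisjsum : ∀ Z ⊆ I, ∀ U : Finset V, (∀ j ∈ Z, bl G j (R j) ⊆ U) →
      ∑ j ∈ Z, core j ≤ U.card := by
    intro Z hZ U hU
    have : ∑ j ∈ Z, core j = (Z.biUnion fun j => bl G j (R j)).card := by
      rw [Finset.card_biUnion]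
      intro a ha b hb hab
      exact hdisj a (hZ ha) b (hZ hb) hab
    rw [this]
    exact Finset.card_le_card (Finset.biUnion_subset.2 hU)
  have hsumI : ∑ j ∈ I, core j ≤ n := by
    have := hdisjsum I (Finset.Subset.refl _) Finset.univ (fun _ _ => Finset.subset_univ _)
    rwa [Finset.card_univ] at this
  have hsumZ : ∀ Z ⊆ I, ∀ k, ∑ j ∈ Z, k * core j ≤ k * n := by
    intro Z hZ k
    rw [← Finset.mul_sum]
    exact Nat.mul_le_mul_left _ ((Finset.sum_le_sum_of_subset hZ).trans hsumI)
  choose Eloc hEloc1 hEloc2 using fun v => local_emulator hG hI v (20 * R v)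
  let E1 : Finset (V × V) := I.biUnion (fun i => (bl G i (3 * R i)).image (fun x => (i, x)))
  let nb : V → Finset V := fun i => I.filter (fun j => R j ≤ R i ∧ G.dist i j ≤ 6 * R i)
  let E2 : Finset (V × V) := (I.filter (fun i => core i ≤ r ^ 2)).biUnion
    (fun i => sph G i (ρ i) ×ˢ ((nb i).biUnion (fun j => sph G j (ρ j))))
  let E3 : Finset (V × V) := (I.filter (fun i => ¬ core i ≤ r ^ 2)).biUnion Eloc
  have hE1 : E1.card ≤ A * n := by
    refine Finset.card_biUnion_le.trans (le_trans (Finset.sum_le_sum fun i _ => ?_)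
      (hsumZ I (Finset.Subset.refl _) A))
    exact Finset.card_image_le.trans (hbig i _ (by omega))
  have hS : ∀ i, r * (sph G i (ρ i)).card ≤ A * core i := fun i =>
    ((Nat.mul_le_mul_right _ (hR1 i)).trans (hρ i).2.2).trans (hbig i _ (by omega))
  have hE2 : E2.card ≤ A ^ 3 * n := by
    refine Finset.card_biUnion_le.trans (le_trans (Finset.sum_le_sum fun i hi => ?_)
      (hsumZ _ (Finset.filter_subset _ I) (A ^ 3)))
    rw [Finset.mem_filter] at hi
    rw [Finset.card_product]
    have h1 : r * ((nb i).biUnion (fun j => sph G j (ρ j))).card ≤ A * (A * core i) := by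
      calc r * ((nb i).biUnion (fun j => sph G j (ρ j))).card
          ≤ r * ∑ j ∈ nb i, (sph G j (ρ j)).card := Nat.mul_le_mul_left _ Finset.card_biUnion_le
        _ = ∑ j ∈ nb i, r * (sph G j (ρ j)).card := Finset.mul_sum _ _ _
        _ ≤ ∑ j ∈ nb i, A * core j := Finset.sum_le_sum fun j _ => hS j
        _ = A * ∑ j ∈ nb i, core j := (Finset.mul_sum _ _ _).symm
        _ ≤ A * (bl G i (7 * R i)).card := by
          refine Nat.mul_le_mul_left _ (hdisjsum _ (Finset.filter_subset _ _) _ ?_)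
          intro j hj y hy
          have hj := (Finset.mem_filter.1 hj).2
          rw [mem_bl] at hy ⊢
          have := hG.dist_triangle (u := i) (v := j) (w := y)
          omega
        _ ≤ _ := Nat.mul_le_mul_left _ (hbig i _ (by omega))
    have h2 := Nat.mul_le_mul (hS i) h1
    refine Nat.le_of_mul_le_mul_left (c := r ^ 2) ?_ (by positivity)
    calc r ^ 2 * ((sph G i (ρ i)).card * ((nb i).biUnion (fun j => sph G j (ρ j))).card)
        = (r * (sph G i (ρ i)).card) * (r * ((nb i).biUnion (fun j => sph G j (ρ j))).card) := by ring
      _ ≤ A * core i * (A * (A * core i)) := h2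
      _ = core i * (A ^ 3 * core i) := by ring
      _ ≤ r ^ 2 * (A ^ 3 * core i) := Nat.mul_le_mul_right _ hi.2
  have hE3 : E3.card ≤ C * A * n := by
    refine Finset.card_biUnion_le.trans (le_trans (Finset.sum_le_sum fun i _ => ?_)
      (hsumZ _ (Finset.filter_subset _ I) (C * A)))
    refine (hEloc1 i).trans ?_
    rw [mul_assoc]
    exact Nat.mul_le_mul_left _ (hbig i _ le_rfl)
  let E0 : Finset (V × V) := E1 ∪ E2 ∪ E3
  have hs1 : (E1 : Set (V × V)) ⊆ (E0 : Set (V × V)) := fun z hz => by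
    simp only [E0, Finset.mem_coe, Finset.mem_union] at hz ⊢; tauto
  have hs2 : (E2 : Set (V × V)) ⊆ (E0 : Set (V × V)) := fun z hz => by
    simp only [E0, Finset.mem_coe, Finset.mem_union] at hz ⊢; tauto
  have hs3 : (E3 : Set (V × V)) ⊆ (E0 : Set (V × V)) := fun z hz => by
    simp only [E0, Finset.mem_coe, Finset.mem_union] at hz ⊢; tauto
  let gg : V → ℕ := fun i => if core i ≤ r ^ 2 then 0 else h (bl G i (20 * R i)).card
  have hmemE2 : ∀ i ∈ I, ∀ j ∈ I, core i ≤ r ^ 2 → R j ≤ R i → G.dist i j ≤ 6 * R i →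
      ∀ y ∈ sph G i (ρ i), ∀ x ∈ sph G j (ρ j), (y, x) ∈ (E0 : Set (V × V)) := by
    intro i hi j hj hc hR hd y hy x hx
    apply hs2
    refine Finset.mem_coe.2 (Finset.mem_biUnion.2 ⟨i, Finset.mem_filter.2 ⟨hi, hc⟩, ?_⟩)
    exact Finset.mem_product.2 ⟨hy, Finset.mem_biUnion.2 ⟨j, Finset.mem_filter.2 ⟨hj, hR, hd⟩, hx⟩⟩
  have hE3r : ∀ i ∈ I, ¬ core i ≤ r ^ 2 → ∀ x y, G.dist i x ≤ 9 * R i → G.dist i y ≤ 9 * R i →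
      Rch G.dist (E0 : Set (V × V)) x y (G.dist x y + gg i) := by
    intro i hi hc x y hx hy
    have h1 := hEloc2 i x y (9 * R i) hx hy (by omega)
    have h2 : gg i = h (bl G i (20 * R i)).card := if_neg hc
    rw [h2]
    refine h1.mono_set (fun z hz => hs3 ?_)
    exact Finset.mem_coe.2 (Finset.mem_biUnion.2 ⟨i, Finset.mem_filter.2 ⟨hi, hc⟩, hz⟩)
  have hroute := route hG I R ρ cov hcov (fun v => (hρ v).1) (fun v => (hρ v).2.1) (r * 20 ^ L) hR2
    (E0 : Set (V × V)) (by
      intro i hi x hx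
      apply hs1
      exact Finset.mem_coe.2 (Finset.mem_biUnion.2 ⟨i, hi, Finset.mem_image.2 ⟨x, mem_bl.2 hx, rfl⟩⟩))
    gg core (g * A) (by positivity) (by
      intro i hi
      by_cases hc : core i ≤ r ^ 2
      · have : gg i = 0 := if_pos hc
        rw [this]
        simp only [Nat.cast_zero]
        positivity
      · have h2 : gg i = h (bl G i (20 * R i)).card := if_neg hc
        rw [h2]
        have h3 : core i ≤ (bl G i (20 * R i)).card := Finset.card_le_card (bl_mono (by omega))
        refine (hg _ (by omega) (Finset.card_le_univ _)).trans ?_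
        rw [mul_assoc]
        refine mul_le_mul_of_nonneg_left ?_ hg0
        exact_mod_cast hbig i _ le_rfl) (by
      intro i hi j hj x y hx hy hix
      have hx' := mem_sph.1 hx
      have hy' := mem_sph.1 hy
      have h1 := (hρ i).2.1
      have h2 := (hρ j).2.1
      have h3 := hR1 i
      have h4 := hG.dist_triangle (u := i) (v := x) (w := j)
      have h4' : G.dist x j = G.dist j x := SimpleGraph.dist_comm
      have h4'' : G.dist i j = G.dist j i := SimpleGraph.dist_comm
      have h5 := hG.dist_triangle (u := j) (v := i) (w := y)
      rcases le_or_gt (R j) (R i) with hij | hij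
      · by_cases hc : core i ≤ r ^ 2
        · exact Rch.edge (Or.inr (hmemE2 i hi j hj hc hij (by omega) y hy x hx)) (by omega)
        · exact (hE3r i hi hc x y (by omega) (by omega)).mono_len (by omega)
      · by_cases hc : core j ≤ r ^ 2
        · exact Rch.edge (Or.inl (hmemE2 j hj i hi hc hij.le (by omega) x hx y hy)) (by omega)
        · exact (hE3r j hj hc x y (by omega) (by omega)).mono_len (by omega))
    T hT
  choose F hF1 hF2 using hroute
  let F' : V × V × Bool → Finset V := fun z => F z.1 z.2.1 z.2.2
  obtain ⟨P, hP1, hP2⟩ := hitting I core n T hn hsumI F' (fun z => hF1 _ _ _) m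
    (Finset.univ.filter (fun z => T ≤ ∑ v ∈ F' z, core v)) (fun z hz => (Finset.mem_filter.1 hz).2)
  have hP3 : ∀ z, T ≤ ∑ v ∈ F' z, core v → ∃ v ∈ F' z, v ∈ P := by
    intro z hz
    by_contra hcon
    push Not at hcon
    have hz' : z ∈ (Finset.univ.filter (fun z => T ≤ ∑ v ∈ F' z, core v)).filter
        (fun j => Disjoint (F' j) P) :=
      Finset.mem_filter.2 ⟨Finset.mem_filter.2 ⟨Finset.mem_univ _, hz⟩, Finset.disjoint_left.2 hcon⟩
    have h1 : (1 : ℝ) ≤ (((Finset.univ.filter (fun z => T ≤ ∑ v ∈ F' z, core v)).filter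
        (fun j => Disjoint (F' j) P)).card : ℝ) := by
      exact_mod_cast Finset.card_pos.2 ⟨z, hz'⟩
    have h2 : ((Finset.univ.filter (fun z => T ≤ ∑ v ∈ F' z, core v)).card : ℝ) ≤ 2 * (n : ℝ) ^ 2 := by
      have h3 : (Finset.univ.filter (fun z => T ≤ ∑ v ∈ F' z, core v)).card ≤
        Fintype.card (V × V × Bool) := Finset.card_le_univ _
      rw [Fintype.card_prod, Fintype.card_prod, Fintype.card_bool, ← hn_def] at h3
      have h4 : ((Finset.univ.filter (fun z => T ≤ ∑ v ∈ F' z, core v)).card : ℝ) ≤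
        ((n * (n * 2) : ℕ) : ℝ) := Nat.cast_le.2 h3
      push_cast at h4
      linarith
    have h5 : (0 : ℝ) ≤ Real.exp (-(T / n : ℝ)) ^ m := by positivity
    have h6 := mul_le_mul_of_nonneg_right h2 h5
    linarith
  refine ⟨E0 ∪ P ×ˢ P, ?_, ?_⟩
  · have h1 := Finset.card_union_le E0 (P ×ˢ P)
    have h2 := Finset.card_union_le (E1 ∪ E2) E3
    have h3 := Finset.card_union_le E1 E2
    rw [Finset.card_product] at h1
    have h4 := Nat.mul_le_mul hP1 hP1
    have h5 : E0.card = (E1 ∪ E2 ∪ E3).card := rfl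
    rw [add_mul, add_mul, sq]
    omega
  · intro s t
    have hsub : (E0 : Set (V × V)) ⊆ ((E0 ∪ P ×ˢ P : Finset (V × V)) : Set (V × V)) := by
      intro z hz
      simp only [Finset.mem_coe, Finset.mem_union] at hz ⊢
      exact Or.inl hz
    rcases hF2 s t with ⟨l, hl1, hl2⟩ | ⟨hb, hall⟩
    · exact ⟨l, hl1.mono_set hsub, hl2⟩
    · obtain ⟨u, hu1, hu2⟩ := hP3 (s, t, true) (hb true)
      obtain ⟨w, hw1, hw2⟩ := hP3 (s, t, false) (hb false)
      obtain ⟨a, b, ha, hb', hab⟩ := hall u hu1 w hw1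
      refine ⟨a + G.dist u w + b, ?_, hab⟩
      refine ((ha.mono_set hsub).trans (Rch.edge (Or.inl ?_) le_rfl)).trans (hb'.mono_set hsub)
      exact Finset.mem_coe.2 (Finset.mem_union_right _ (Finset.mem_product.2 ⟨hu2, hw2⟩))

theorem aSeq_bounds (i : ℕ) : 0 < aSeq i ∧ aSeq i ≤ 1 := by
  induction i with
  | zero => simp [aSeq]
  | succ i ih =>
    rw [aSeq]
    have h : (1 : ℝ) ≤ 6 - 4 * aSeq i := by linarith [ih.2]
    exact ⟨by positivity, (div_le_one (by linarith)).2 h⟩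

/-- Emulators of linear size with error exponent `a`. -/
def Ach (a : ℝ) : Prop :=
  ∃ C : ℕ, 0 < C ∧ ∀ (V : Type) [Fintype V] (G : SimpleGraph V), G.Connected →
    ∃ E : Finset (V × V), E.card ≤ C * Fintype.card V ∧
      GoodE G E (C * (Fintype.card V : ℝ) ^ a)

theorem ach_base (a : ℝ) (ha : 1 ≤ a) : Ach a := by
  classical
  refine ⟨2, by norm_num, ?_⟩
  intro V _ G hG
  obtain ⟨z⟩ := hG.nonempty
  refine ⟨Finset.univ.image (fun x => (z, x)), ?_, ?_⟩
  · refine Finset.card_image_le.trans ?_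
    rw [Finset.card_univ]; omega
  · intro s t
    have hmem : ∀ x, (z, x) ∈ ((Finset.univ.image (fun x => (z, x)) : Finset (V × V)) : Set (V × V)) :=
      fun x => by simp
    refine ⟨G.dist s z + G.dist z t, (Rch.edge (Or.inr (hmem s)) le_rfl).trans
      (Rch.edge (Or.inl (hmem t)) le_rfl), ?_⟩
    have hd : ∀ x y, G.dist x y ≤ Fintype.card V := by
      intro x y
      obtain ⟨p, hp, hl⟩ := hG.exists_path_of_dist x y
      rw [← hl]
      exact hp.length_lt.le
    have h1 : (1 : ℝ) ≤ Fintype.card V := by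
      have : Nonempty V := ⟨z⟩
      exact_mod_cast Nat.succ_le_of_lt (Fintype.card_pos (α := V))
    have h2 : (Fintype.card V : ℝ) ≤ (Fintype.card V : ℝ) ^ a := by
      have := Real.rpow_le_rpow_of_exponent_le h1 ha
      rwa [Real.rpow_one] at this
    have h3 : (G.dist s z : ℝ) ≤ Fintype.card V := by exact_mod_cast hd s z
    have h4 : (G.dist z t : ℝ) ≤ Fintype.card V := by exact_mod_cast hd z t
    have h5 : (0 : ℝ) ≤ G.dist s t := Nat.cast_nonneg _
    push_cast
    linarith

theorem toIHyp {a : ℝ} {C : ℕ}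
    (h : ∀ (V : Type) [Fintype V] (G : SimpleGraph V), G.Connected →
    ∃ E : Finset (V × V), E.card ≤ C * Fintype.card V ∧
      GoodE G E (C * (Fintype.card V : ℝ) ^ a)) (n : ℕ) :
    IHyp n C (fun k => ⌊(C : ℝ) * (k : ℝ) ^ a⌋₊) := by
  intro W _ G hG _
  obtain ⟨E, hE, hE2⟩ := h W G hG
  refine ⟨E, hE, fun s t => ?_⟩
  obtain ⟨l, hl, hl2⟩ := hE2 s t
  refine hl.mono_len ?_
  rcases le_or_gt l (G.dist s t) with h1 | h1
  · omega
  · have h2 : l - G.dist s t ≤ ⌊(C : ℝ) * (Fintype.card W : ℝ) ^ a⌋₊ := by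
      apply Nat.le_floor
      rw [Nat.cast_sub h1.le]
      linarith
    simp only
    omega

set_option maxHeartbeats 1000000 in
theorem ach_step (a ε : ℝ) (ha0 : 0 < a) (ha1 : a ≤ 1) (hε : 0 < ε) (h : Ach (a + ε / 4)) :
    Ach (1 / (6 - 4 * a) + ε) := by
  obtain ⟨C, hC, hh⟩ := h
  set α : ℝ := 1 / (6 - 4 * a) with hα
  have hα0 : 0 < α := by rw [hα]; apply div_pos <;> linarith
  have hα1 : α * (3 - 2 * a) = 1 / 2 := by
    rw [hα]; field_simp [show (6 - 4 * a) ≠ 0 by linarith]; ring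
  let k : ℕ := ⌈2 / ε⌉₊
  have hk : 2 / ε ≤ k := Nat.le_ceil _
  have hk0 : (0 : ℝ) < k := lt_of_lt_of_le (by positivity) hk
  have hk0' : k ≠ 0 := by rintro h; rw [h] at hk0; simp at hk0
  have hk1 : 1 / (k : ℝ) ≤ ε / 2 := by
    rw [div_le_iff₀ hk0]
    rw [div_le_iff₀ hε] at hk
    linarith
  let A : ℕ := 20 ^ k
  have hA1 : 1 < A := Nat.one_lt_pow hk0' (by norm_num)
  let c : ℝ := 1 + 2 / (ε / 4)
  have hc1 : 1 ≤ c := by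
    have : 0 < 2 / (ε / 4) := by positivity
    simp only [c]; linarith
  refine ⟨(A + A ^ 3 + C * A + 4) + ⌈29 * 40 + 4 * A * (C * (2 * c)) ⌉₊, by omega, ?_⟩
  intro V _ G hG
  have hne : Nonempty V := hG.nonempty
  set n := Fintype.card V with hn
  have hn0 : 0 < n := Fintype.card_pos
  set N : ℝ := (n : ℝ) with hN
  have hN1 : 1 ≤ N := by rw [hN]; exact_mod_cast hn0
  have hN0 : 0 < N := by linarith
  have hpow1 : ∀ x : ℝ, 0 ≤ x → 1 ≤ N ^ x := fun x hx => Real.one_le_rpow hN1 hx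
  let r : ℕ := ⌈N ^ (α + ε / 2)⌉₊
  have hr_lo : N ^ (α + ε / 2) ≤ r := Nat.le_ceil _
  have hr_one : 1 ≤ N ^ (α + ε / 2) := hpow1 _ (by positivity)
  have hr_hi : (r : ℝ) ≤ 2 * N ^ (α + ε / 2) := by
    have := Nat.ceil_lt_add_one (show 0 ≤ N ^ (α + ε / 2) by positivity)
    linarith
  have hr1 : 1 ≤ r := by
    have : (1 : ℝ) ≤ r := hr_one.trans hr_lo
    exact_mod_cast this
  have hr0 : (0 : ℝ) < r := by exact_mod_cast hr1
  let L : ℕ := Nat.log A n + 1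
  have hL1 : n < A ^ L := Nat.lt_pow_succ_log_self hA1 n
  have hL2 : (20 : ℝ) ^ L ≤ 20 * N ^ (ε / 2) := by
    have h1 : A ^ Nat.log A n ≤ n := Nat.pow_log_le_self A hn0.ne'
    have h2 : ((20 : ℝ) ^ Nat.log A n) ^ k ≤ N := by
      rw [← pow_mul, mul_comm, pow_mul]
      have h1' : ((A ^ Nat.log A n : ℕ) : ℝ) ≤ N := Nat.cast_le.2 h1
      have hA' : (A : ℝ) = (20 : ℝ) ^ k := by simp [A]
      rw [Nat.cast_pow, hA'] at h1'
      exact h1'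
    have h3 : (20 : ℝ) ^ Nat.log A n ≤ N ^ (1 / (k : ℝ)) := by
      have h4 := Real.rpow_le_rpow (by positivity) h2 (show 0 ≤ 1 / (k : ℝ) by positivity)
      rw [one_div] at h4
      rw [Real.pow_rpow_inv_natCast (by positivity) hk0'] at h4
      rwa [one_div]
    have h5 := Real.rpow_le_rpow_of_exponent_le hN1 hk1
    rw [show L = Nat.log A n + 1 from rfl, pow_succ]
    linarith
  let T : ℕ := ⌈c * N ^ (1 / 2 + ε / 4)⌉₊
  have hT_lo : c * N ^ (1 / 2 + ε / 4) ≤ T := Nat.le_ceil _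
  have hT_one : 1 ≤ c * N ^ (1 / 2 + ε / 4) := by
    have := hpow1 (1 / 2 + ε / 4) (by positivity)
    nlinarith
  have hT_hi : (T : ℝ) ≤ 2 * c * N ^ (1 / 2 + ε / 4) := by
    have := Nat.ceil_lt_add_one (show 0 ≤ c * N ^ (1 / 2 + ε / 4) by linarith)
    linarith
  have hT0 : 0 < T := by
    have : (1 : ℝ) ≤ T := hT_one.trans hT_lo
    exact_mod_cast this
  let m : ℕ := ⌈N ^ (1 / 2 : ℝ)⌉₊
  have hm_lo : N ^ (1 / 2 : ℝ) ≤ m := Nat.le_ceil _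
  have hsqrt : N ^ (1 / 2 : ℝ) * N ^ (1 / 2 : ℝ) = N := by
    rw [← Real.rpow_add hN0]; norm_num
  have hm_hi : (m : ℝ) ≤ 2 * N ^ (1 / 2 : ℝ) := by
    have := Nat.ceil_lt_add_one (show 0 ≤ N ^ (1 / 2 : ℝ) by positivity)
    have := hpow1 (1 / 2) (by norm_num)
    linarith
  have hm2 : m ^ 2 ≤ 4 * n := by
    have h1 : (m : ℝ) ^ 2 ≤ 4 * N := by
      have h0 : (0 : ℝ) ≤ m := Nat.cast_nonneg _
      nlinarith
    rw [hN] at h1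
    exact_mod_cast h1
  have hexp : 2 * N ^ 2 * Real.exp (-(T / N : ℝ)) ^ m < 1 := by
    have h1 : Real.exp (-(T / N : ℝ)) ^ m = Real.exp (-(m * T / N)) := by
      rw [← Real.exp_nat_mul]; congr 1; ring
    have h2 : 1 + 2 * Real.log N ≤ m * T / N := by
      have h3 : N ^ (1 / 2 : ℝ) * (c * N ^ (1 / 2 + ε / 4)) ≤ m * T := by gcongr
      have h4 : N ^ (1 / 2 : ℝ) * (c * N ^ (1 / 2 + ε / 4)) = c * N ^ (ε / 4) * N := by
        rw [Real.rpow_add hN0]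
        calc _ = c * N ^ (ε / 4) * (N ^ (1 / 2 : ℝ) * N ^ (1 / 2 : ℝ)) := by ring
          _ = _ := by rw [hsqrt]
      have h5 : c * N ^ (ε / 4) ≤ m * T / N := by
        rw [le_div_iff₀ hN0]; linarith
      have h6 := Real.log_le_rpow_div hN0.le (show 0 < ε / 4 by positivity)
      have h7 := hpow1 (ε / 4) (by positivity)
      have h8 : c * N ^ (ε / 4) = N ^ (ε / 4) + 2 * (N ^ (ε / 4) / (ε / 4)) := by
        simp only [c]; ring
      linarith
    have h3 : N ^ 2 = Real.exp (2 * Real.log N) := by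
      rw [two_mul, Real.exp_add, Real.exp_log hN0, sq]
    rw [h1, h3, mul_assoc, ← Real.exp_add]
    have h4 : Real.exp (2 * Real.log N + -(m * T / N)) ≤ Real.exp (-1) :=
      Real.exp_le_exp.2 (by linarith)
    have h5 : Real.exp (-1) * Real.exp 1 = 1 := by rw [← Real.exp_add]; simp
    have h6 := Real.exp_one_gt_d9
    have h7 := Real.exp_pos (-1)
    nlinarith
  let g : ℝ := C * N ^ (ε / 4) * (r : ℝ) ^ (2 * (a - 1))
  have hg0 : 0 ≤ g := by positivity
  have hg : ∀ j : ℕ, r ^ 2 < j → j ≤ n →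
      ((⌊(C : ℝ) * (j : ℝ) ^ (a + ε / 4)⌋₊ : ℕ) : ℝ) ≤ g * j := by
    intro j hj1 hj2
    have hj1' : (r : ℝ) ^ 2 ≤ j := by exact_mod_cast hj1.le
    have hj2' : (j : ℝ) ≤ N := by rw [hN]; exact_mod_cast hj2
    have hj0 : (0 : ℝ) < j := lt_of_lt_of_le (by positivity) hj1'
    refine (Nat.floor_le (by positivity)).trans ?_
    have e1 : (j : ℝ) ^ (a + ε / 4) = j * (j : ℝ) ^ (ε / 4) * (j : ℝ) ^ (a - 1) := by
      conv_rhs => rw [← Real.rpow_one_add' hj0.le (by positivity), ← Real.rpow_add hj0]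
      congr 1; ring
    have e2 : (j : ℝ) ^ (ε / 4) ≤ N ^ (ε / 4) := Real.rpow_le_rpow hj0.le hj2' (by positivity)
    have e3 : (j : ℝ) ^ (a - 1) ≤ (r : ℝ) ^ (2 * (a - 1)) := by
      have := Real.rpow_le_rpow_of_nonpos (by positivity) hj1' (show a - 1 ≤ 0 by linarith)
      rwa [← Real.rpow_natCast, ← Real.rpow_mul hr0.le] at this
    calc (C : ℝ) * (j : ℝ) ^ (a + ε / 4) = C * (j * (j : ℝ) ^ (ε / 4) * (j : ℝ) ^ (a - 1)) := by rw [e1]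
      _ ≤ C * (j * N ^ (ε / 4) * (r : ℝ) ^ (2 * (a - 1))) := by gcongr
      _ = g * j := by simp only [g]; ring
  have hgT : g * T ≤ C * (2 * c) * N ^ (α + ε) := by
    have e1 : (r : ℝ) ^ (2 * (a - 1)) ≤ N ^ ((α + ε / 2) * (2 * (a - 1))) := by
      rw [Real.rpow_mul hN0.le]
      exact Real.rpow_le_rpow_of_nonpos (by positivity) hr_lo (by linarith)
    calc g * T ≤ (C * N ^ (ε / 4) * N ^ ((α + ε / 2) * (2 * (a - 1)))) *
          (2 * c * N ^ (1 / 2 + ε / 4)) := by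
          simp only [g]; gcongr
      _ = C * (2 * c) * N ^ (ε / 4 + (α + ε / 2) * (2 * (a - 1)) + (1 / 2 + ε / 4)) := by
          rw [Real.rpow_add hN0 (ε / 4 + _), Real.rpow_add hN0 (ε / 4)]; ring
      _ ≤ C * (2 * c) * N ^ (α + ε) := by
          have : N ^ (ε / 4 + (α + ε / 2) * (2 * (a - 1)) + (1 / 2 + ε / 4)) ≤ N ^ (α + ε) := by
            apply Real.rpow_le_rpow_of_exponent_le hN1
            have w1 : ε * a ≤ ε * 1 := mul_le_mul_of_nonneg_left ha1 hε.le
            have w2 : ε / 4 + (α + ε / 2) * (2 * (a - 1)) + (1 / 2 + ε / 4) =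
                α + ε * a - ε / 2 := by linear_combination -hα1
            rw [w2]
            linarith
          gcongr
  obtain ⟨E, hE1, hE2⟩ := step hG A L r C m T _ g hg0 hr1 hL1 (toIHyp hh n) hg hT0 hexp
  refine ⟨E, ?_, ?_⟩
  · refine hE1.trans ?_
    rw [← hn]
    calc (A + A ^ 3 + C * A) * n + m ^ 2 ≤ (A + A ^ 3 + C * A) * n + 4 * n := by omega
      _ = (A + A ^ 3 + C * A + 4) * n := by ring
      _ ≤ _ := Nat.mul_le_mul_right _ (by omega)
  · intro s t
    obtain ⟨l, hl1, hl2⟩ := hE2 s t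
    refine ⟨l, hl1, hl2.trans ?_⟩
    have hX : 0 < N ^ (α + ε) := by positivity
    have f1 : ((r * 20 ^ L : ℕ) : ℝ) ≤ 40 * N ^ (α + ε) := by
      push_cast
      calc (r : ℝ) * 20 ^ L ≤ (2 * N ^ (α + ε / 2)) * (20 * N ^ (ε / 2)) := by gcongr
        _ = 40 * (N ^ (α + ε / 2) * N ^ (ε / 2)) := by ring
        _ = 40 * N ^ (α + ε) := by rw [← Real.rpow_add hN0]; congr 2; ring
    have f2 : 4 * (g * A) * T ≤ 4 * A * (C * (2 * c)) * N ^ (α + ε) := by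
      calc 4 * (g * A) * T = 4 * A * (g * T) := by ring
        _ ≤ 4 * A * (C * (2 * c) * N ^ (α + ε)) := by gcongr
        _ = _ := by ring
    have f3 : 29 * 40 + 4 * A * (C * (2 * c)) ≤
        (((A + A ^ 3 + C * A + 4) + ⌈29 * 40 + 4 * A * (C * (2 * c)) ⌉₊ : ℕ) : ℝ) := by
      have := Nat.le_ceil (29 * 40 + 4 * A * (C * (2 * c)))
      have h0 : (0 : ℝ) ≤ ((A + A ^ 3 + C * A + 4 : ℕ) : ℝ) := Nat.cast_nonneg _
      rw [Nat.cast_add]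
      linarith
    have f4 := mul_le_mul_of_nonneg_right f3 hX.le
    linarith

theorem ach_all (i : ℕ) : ∀ ε : ℝ, 0 < ε → Ach (aSeq i + ε) := by
  induction i with
  | zero => intro ε hε; exact ach_base _ (by rw [aSeq]; linarith)
  | succ i ih =>
    intro ε hε
    rw [aSeq]
    exact ach_step _ ε (aSeq_bounds i).1 (aSeq_bounds i).2 hε (ih _ (by positivity))

theorem iterated_emulator_bounds :
    ∀ i : ℕ, ∀ ε : ℝ, 0 < ε → ∃ C : ℝ, 0 < C ∧
      ∀ n : ℕ, ∀ G : SimpleGraph (Fin n), G.Connected →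
        ∃ (H : SimpleGraph (Fin n)) (w : Sym2 (Fin n) → ℕ),
          IsAdditiveEmulator G H w ⌈C * (n : ℝ) ^ (aSeq i + ε)⌉₊ ∧
          (H.edgeSet.ncard : ℝ) ≤ C * n := by
  intro i ε hε
  obtain ⟨C, hC, h⟩ := ach_all i ε hε
  refine ⟨C, by exact_mod_cast hC, ?_⟩
  intro n G hG
  obtain ⟨E, hE, hE2⟩ := h (Fin n) G hG
  rw [Fintype.card_fin] at hE hE2
  obtain ⟨H, w, h1, h2⟩ := toEmulator G hG E _ hE2
  refine ⟨H, w, h1, h2.trans ?_⟩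
  exact_mod_cast hE
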